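/- Let β : [0,t_f] → {0,1}^N be the sum-up rounding of α on the grid. Then for every t ∈ [0,t_f] one has max_{i=1,…,N} |∫_0^t (α_i(τ) − β_i(τ)) dτ| ≤ (N−1)·Δt. -/

import Mathlib

/-!
On the `j`-th grid interval the deviation `∫₀ᵘ (α_i - β_i)` is nondecreasing in `u` if `β_i = 0`
there and nonincreasing if `β_i = 1`. Hence it can only reach a new minimum at the right end of an
interval of length `h` on which `i` was chosen, with the value `p̂_{i,j} - h`. The residuals
`p̂_{l,j}` add up to `h`, so the maximal one satisfies `p̂_{i,j} ≥ h / N`, and by induction over the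
grid every deviation stays above `-(N - 1) / N * Δt`. As the deviations of all `N` components add
up to zero, this lower bound also yields the upper bound `(N - 1) * ((N - 1) / N * Δt)`.
-/

open MeasureTheory

-- Given the vector `phat` of residuals at one grid interval, `surChoice phat i = 1`
-- iff `i` is the smallest index maximizing `phat`, and `0` otherwise.
open Classical in
noncomputable def surChoice {N : ℕ} (phat : Fin N → ℝ) : Fin N → ℝ :=
  fun i => if (∀ l, phat l ≤ phat i) ∧ (∀ l, phat l = phat i → i ≤ l) then 1 else 0

/-- `surData t α j = (p_{·,j}, s_{·,j})` where `p_{·,j}` is the sum-up rounding row at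
grid interval `j` (for the grid `t` and relaxed weights `α`), and
`s_{i,j} = Σ_{l<j} p_{i,l} (t_{l+1} - t_l)`.  The residuals are
`p̂_{i,j} = ∫_0^{t_{j+1}} α_i(τ) dτ - s_{i,j}`, and `p_{·,j} = surChoice p̂_{·,j}`. -/
noncomputable def surData {N : ℕ} (t : ℕ → ℝ) (α : ℝ → Fin N → ℝ) :
    ℕ → (Fin N → ℝ) × (Fin N → ℝ)
  | 0 => (surChoice fun i => ∫ τ in (0:ℝ)..(t 1), α τ i, fun _ => 0)
  | j + 1 =>
    let prev := surData t α j
    let s : Fin N → ℝ := fun i => prev.2 i + prev.1 i * (t (j + 1) - t j)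
    (surChoice fun i => (∫ τ in (0:ℝ)..(t (j + 2)), α τ i) - s i, s)

/-- `surRound t α j i` is the sum-up rounding value `p_{i,j}`. -/
noncomputable def surRound {N : ℕ} (t : ℕ → ℝ) (α : ℝ → Fin N → ℝ) (j : ℕ) :
    Fin N → ℝ :=
  (surData t α j).1

section OrderedField

variable {ι K : Type*} [Fintype ι] [Field K] [LinearOrder K] [IsStrictOrderedRing K]

theorem sum_div_card_le_of_forall_le {q : ι → K} {k : ι} (hk : ∀ l, q l ≤ q k) :
    (∑ l, q l) / Fintype.card ι ≤ q k := by
  have : Nonempty ι := ⟨k⟩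
  rw [div_le_iff₀' (by exact_mod_cast Fintype.card_pos), ← nsmul_eq_mul]
  exact Finset.sum_le_card_nsmul _ _ _ fun l _ => hk l

theorem le_card_sub_one_mul_of_sum_eq_zero {x : ι → K} {c : K} (hsum : ∑ i, x i = 0)
    (hx : ∀ i, -c ≤ x i) (i : ι) : x i ≤ (Fintype.card ι - 1) * c := by
  have hle : x i + c ≤ ∑ l, (x l + c) :=
    Finset.single_le_sum (f := fun l => x l + c) (fun l _ => by linarith [hx l])
      (Finset.mem_univ i)
  have htotal : ∑ l, (x l + c) = Fintype.card ι * c := by simp [Finset.sum_add_distrib, hsum]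
  linarith

theorem natCast_sub_one_div_self_nonneg (N : ℕ) [NeZero N] : 0 ≤ ((N : K) - 1) / N :=
  div_nonneg (sub_nonneg.2 (by exact_mod_cast NeZero.one_le)) N.cast_nonneg

end OrderedField

theorem exists_mem_Icc_succ {β : Type*} [LinearOrder β] {t : ℕ → β} {n : ℕ} {u : β} (hn : 0 < n)
    (hu : u ∈ Set.Icc (t 0) (t n)) : ∃ j < n, u ∈ Set.Icc (t j) (t (j + 1)) := by
  induction n, hn using Nat.le_induction with
  | base => exact ⟨0, one_pos, hu⟩
  | succ n _ ih =>
    rcases le_total (t n) u with h | h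
    · exact ⟨n, n.lt_succ_self, h, hu.2⟩
    · obtain ⟨j, hj, hmem⟩ := ih ⟨hu.1, h⟩
      exact ⟨j, hj.trans n.lt_succ_self, hmem⟩

section StepFunctions

variable {E : Type*} [NormedAddCommGroup E] {f : ℝ → E} {a b : ℝ} {c : E}

theorem intervalIntegrable_of_eq_const_Ico (hab : a ≤ b) (hf : ∀ τ ∈ Set.Ico a b, f τ = c) :
    IntervalIntegrable f volume a b := by
  refine (intervalIntegrable_const (c := c)).congr_uIoo fun τ hτ => ?_
  rw [Set.uIoo_of_le hab] at hτ
  exact (hf τ (Set.Ioo_subset_Ico_self hτ)).symm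

variable [NormedSpace ℝ E] [CompleteSpace E]

theorem integral_of_eq_const_Ico (hab : a ≤ b) (hf : ∀ τ ∈ Set.Ico a b, f τ = c) :
    ∫ τ in a..b, f τ = (b - a) • c := by
  rw [intervalIntegral.integral_congr_Ioo_of_le hab fun τ hτ =>
    hf τ (Set.Ioo_subset_Ico_self hτ), intervalIntegral.integral_const]

theorem integral_of_eq_const_grid_Ico {t : ℕ → ℝ} {p : ℕ → E} {j : ℕ}
    (hmono : ∀ l < j, t l ≤ t (l + 1))
    (hf : ∀ l < j, ∀ τ ∈ Set.Ico (t l) (t (l + 1)), f τ = p l) :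
    ∫ τ in t 0..t j, f τ = ∑ l ∈ Finset.range j, (t (l + 1) - t l) • p l := by
  rw [← intervalIntegral.sum_integral_adjacent_intervals fun l hl =>
    intervalIntegrable_of_eq_const_Ico (hmono l hl) (hf l hl)]
  refine Finset.sum_congr rfl fun l hl => ?_
  rw [Finset.mem_range] at hl
  exact integral_of_eq_const_Ico (hmono l hl) (hf l hl)

end StepFunctions

/-- A relaxed control on `[0, T]`: an integrable function with values in the standard simplex. -/
structure IsRelaxedControl {ι : Type*} [Fintype ι] (α : ℝ → ι → ℝ) (T : ℝ) : Prop where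
  intervalIntegrable (i : ι) : IntervalIntegrable (fun τ => α τ i) volume 0 T
  mem_stdSimplex : ∀ τ ∈ Set.Icc 0 T, α τ ∈ stdSimplex ℝ ι

namespace IsRelaxedControl

variable {ι : Type*} [Fintype ι] {α : ℝ → ι → ℝ} {a b : ℝ}

theorem restrict (hα : IsRelaxedControl α b) (ha : a ∈ Set.Icc 0 b) : IsRelaxedControl α a where
  intervalIntegrable i := (hα.intervalIntegrable i).mono_set <| by
    rw [Set.uIcc_of_le ha.1, Set.uIcc_of_le (ha.1.trans ha.2)]
    exact Set.Icc_subset_Icc_right ha.2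
  mem_stdSimplex τ hτ := hα.mem_stdSimplex τ ⟨hτ.1, hτ.2.trans ha.2⟩

theorem sum_integral (hα : IsRelaxedControl α b) (hb : 0 ≤ b) :
    ∑ i, ∫ τ in (0 : ℝ)..b, α τ i = b := by
  rw [← intervalIntegral.integral_finsetSum fun i _ => hα.intervalIntegrable i,
    intervalIntegral.integral_congr_Ioo_of_le hb fun τ hτ =>
      (hα.mem_stdSimplex τ (Set.Ioo_subset_Icc_self hτ)).2]
  simp

theorem integral_le_integral (hα : IsRelaxedControl α b) (ha : a ∈ Set.Icc 0 b) (i : ι) :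
    ∫ τ in (0 : ℝ)..a, α τ i ≤ ∫ τ in (0 : ℝ)..b, α τ i := by
  refine intervalIntegral.integral_mono_interval le_rfl ha.1 ha.2 ?_ (hα.intervalIntegrable i)
  exact ae_restrict_of_forall_mem measurableSet_Ioc fun τ hτ =>
    (hα.mem_stdSimplex τ (Set.Ioc_subset_Icc_self hτ)).1 i

theorem integral_sub_integral_le (hα : IsRelaxedControl α b) (ha : a ∈ Set.Icc 0 b) (i : ι) :
    (∫ τ in (0 : ℝ)..b, α τ i) - ∫ τ in (0 : ℝ)..a, α τ i ≤ b - a :=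
  calc (∫ τ in (0 : ℝ)..b, α τ i) - ∫ τ in (0 : ℝ)..a, α τ i
      ≤ ∑ l, ((∫ τ in (0 : ℝ)..b, α τ l) - ∫ τ in (0 : ℝ)..a, α τ l) :=
        Finset.single_le_sum
          (f := fun l => (∫ τ in (0 : ℝ)..b, α τ l) - ∫ τ in (0 : ℝ)..a, α τ l)
          (fun l _ => sub_nonneg.2 (hα.integral_le_integral ha l)) (Finset.mem_univ i)
    _ = b - a := by
        rw [Finset.sum_sub_distrib, hα.sum_integral (ha.1.trans ha.2),
          (hα.restrict ha).sum_integral ha.1]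

end IsRelaxedControl

theorem exists_surChoice_eq_single {N : ℕ} [NeZero N] (q : Fin N → ℝ) :
    ∃ k, surChoice q = Pi.single k 1 ∧ ∀ l, q l ≤ q k := by
  -- The smallest maximizer of `q` is the maximizer for the lexicographic order on `(q i, -i)`.
  obtain ⟨k, hk⟩ := Finite.exists_max fun i => toLex (q i, OrderDual.toDual i)
  simp only [Prod.Lex.toLex_le_toLex, OrderDual.toDual_le_toDual] at hk
  have hmax : ∀ l, q l ≤ q k := fun l => (hk l).elim le_of_lt fun h => h.1.le
  have hmin : ∀ l, q l = q k → k ≤ l := fun l hl => (hk l).elim (fun h => absurd hl h.ne) And.right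
  refine ⟨k, funext fun i => ?_, hmax⟩
  have hiff : ((∀ l, q l ≤ q i) ∧ ∀ l, q l = q i → i ≤ l) ↔ i = k := by
    refine ⟨fun ⟨himax, himin⟩ => ?_, fun h => h ▸ ⟨hmax, hmin⟩⟩
    have hik : q i = q k := (hmax i).antisymm (himax k)
    exact (himin k hik.symm).antisymm (hmin i hik)
  simp only [surChoice, hiff, Pi.single_apply]

/-- The accumulated rounding `s_{i,j} = Σ_{l<j} p_{i,l} (t_{l+1} - t_l)`. -/
noncomputable def surSum {N : ℕ} (t : ℕ → ℝ) (α : ℝ → Fin N → ℝ) (j : ℕ) (i : Fin N) : ℝ :=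
  ∑ l ∈ Finset.range j, surRound t α l i * (t (l + 1) - t l)

/-- The residual `p̂_{i,j} = ∫_0^{t_{j+1}} α_i(τ) dτ - s_{i,j}`. -/
noncomputable def surResidual {N : ℕ} (t : ℕ → ℝ) (α : ℝ → Fin N → ℝ) (j : ℕ) (i : Fin N) : ℝ :=
  (∫ τ in (0 : ℝ)..t (j + 1), α τ i) - surSum t α j i

/-- The deviation `∫_0^u (α_i(τ) - β_i(τ)) dτ` of the sum-up rounding `β` at a time `u` in the
`j`-th grid interval, with the integral of `β_i` written out. -/
noncomputable def surDeviation {N : ℕ} (t : ℕ → ℝ) (α : ℝ → Fin N → ℝ) (j : ℕ) (u : ℝ)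
    (i : Fin N) : ℝ :=
  (∫ τ in (0 : ℝ)..u, α τ i) - (surSum t α j i + surRound t α j i * (u - t j))

section SumUpRounding

variable {N : ℕ} {t : ℕ → ℝ} {α : ℝ → Fin N → ℝ}

theorem surData_snd (t : ℕ → ℝ) (α : ℝ → Fin N → ℝ) (j : ℕ) :
    (surData t α j).2 = surSum t α j := by
  induction j with
  | zero => simp [surData, surSum, funext_iff]
  | succ j ih =>
    funext i
    simp only [surData, ih, surSum, surRound, Finset.sum_range_succ]

theorem surRound_eq_surChoice (t : ℕ → ℝ) (α : ℝ → Fin N → ℝ) (j : ℕ) :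
    surRound t α j = surChoice (surResidual t α j) := by
  cases j with
  | zero =>
    unfold surResidual
    simp [surRound, surData, surSum]
  | succ j =>
    unfold surResidual
    rw [← surData_snd]
    rfl

theorem exists_surRound_eq_single [NeZero N] (t : ℕ → ℝ) (α : ℝ → Fin N → ℝ) (j : ℕ) :
    ∃ k, surRound t α j = Pi.single k 1 ∧ ∀ l, surResidual t α j l ≤ surResidual t α j k := by
  rw [surRound_eq_surChoice]
  exact exists_surChoice_eq_single _

theorem sum_surRound [NeZero N] (t : ℕ → ℝ) (α : ℝ → Fin N → ℝ) (j : ℕ) :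
    ∑ i, surRound t α j i = 1 := by
  obtain ⟨k, hk, -⟩ := exists_surRound_eq_single t α j
  simp [hk]

theorem sum_surSum [NeZero N] (t : ℕ → ℝ) (α : ℝ → Fin N → ℝ) (j : ℕ) :
    ∑ i, surSum t α j i = t j - t 0 := by
  simp only [surSum]
  rw [Finset.sum_comm]
  simp only [← Finset.sum_mul, sum_surRound, one_mul, Finset.sum_range_sub]

theorem sum_surResidual [NeZero N] {j : ℕ} (ht0 : t 0 = 0) (hj : 0 ≤ t (j + 1))
    (hα : IsRelaxedControl α (t (j + 1))) :
    ∑ i, surResidual t α j i = t (j + 1) - t j := by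
  simp only [surResidual, Finset.sum_sub_distrib, hα.sum_integral hj, sum_surSum, ht0, sub_zero]

theorem sum_surDeviation [NeZero N] {u : ℝ} (ht0 : t 0 = 0) (hu : 0 ≤ u)
    (hα : IsRelaxedControl α u) (j : ℕ) : ∑ i, surDeviation t α j u i = 0 := by
  simp only [surDeviation, Finset.sum_sub_distrib, Finset.sum_add_distrib, ← Finset.sum_mul,
    hα.sum_integral hu, sum_surSum, sum_surRound, ht0]
  ring

theorem surDeviation_right (t : ℕ → ℝ) (α : ℝ → Fin N → ℝ) (j : ℕ) (i : Fin N) :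
    surDeviation t α j (t (j + 1)) i = surDeviation t α (j + 1) (t (j + 1)) i := by
  simp only [surDeviation, surSum, Finset.sum_range_succ, sub_self, mul_zero, add_zero]

theorem surDeviation_zero_left (ht0 : t 0 = 0) (α : ℝ → Fin N → ℝ) (i : Fin N) :
    surDeviation t α 0 (t 0) i = 0 := by
  simp [surDeviation, surSum, ht0]

theorem surDeviation_le_of_surRound_eq_zero {u v : ℝ} {j : ℕ} {i : Fin N}
    (hi : surRound t α j i = 0) (hα : IsRelaxedControl α v) (hu : u ∈ Set.Icc 0 v) :
    surDeviation t α j u i ≤ surDeviation t α j v i := by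
  simpa only [surDeviation, hi, zero_mul, add_zero, sub_le_sub_iff_right] using
    hα.integral_le_integral hu i

theorem surDeviation_le_of_surRound_eq_one {u v : ℝ} {j : ℕ} {i : Fin N}
    (hi : surRound t α j i = 1) (hα : IsRelaxedControl α v) (hu : u ∈ Set.Icc 0 v) :
    surDeviation t α j v i ≤ surDeviation t α j u i := by
  simp only [surDeviation, hi, one_mul]
  linarith [hα.integral_sub_integral_le hu i]

theorem neg_le_surDeviation_right [NeZero N] {j : ℕ} {k : Fin N} (ht0 : t 0 = 0)
    (hj : 0 ≤ t (j + 1)) (hα : IsRelaxedControl α (t (j + 1))) (hround : surRound t α j k = 1)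
    (hmax : ∀ l, surResidual t α j l ≤ surResidual t α j k) :
    -(((N : ℝ) - 1) / N * (t (j + 1) - t j)) ≤ surDeviation t α j (t (j + 1)) k := by
  have hN : (N : ℝ) ≠ 0 := NeZero.ne _
  have hmean := sum_div_card_le_of_forall_le hmax
  rw [sum_surResidual ht0 hj hα, Fintype.card_fin] at hmean
  calc -(((N : ℝ) - 1) / N * (t (j + 1) - t j))
      = (t (j + 1) - t j) / N - (t (j + 1) - t j) := by field_simp; ring
    _ ≤ surResidual t α j k - (t (j + 1) - t j) := sub_le_sub_right hmean _
    _ = surDeviation t α j (t (j + 1)) k := by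
        rw [surDeviation, surResidual, hround, one_mul, sub_sub]

theorem neg_le_surDeviation_of_left [NeZero N] {Δ u : ℝ} {j : ℕ} (ht0 : t 0 = 0) (hj : 0 ≤ t j)
    (hα : IsRelaxedControl α (t (j + 1))) (hmesh : t (j + 1) - t j ≤ Δ)
    (hu : u ∈ Set.Icc (t j) (t (j + 1)))
    (hleft : ∀ i, -(((N : ℝ) - 1) / N * Δ) ≤ surDeviation t α j (t j) i) (i : Fin N) :
    -(((N : ℝ) - 1) / N * Δ) ≤ surDeviation t α j u i := by
  have hu0 : 0 ≤ u := hj.trans hu.1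
  obtain ⟨k, hround, hmax⟩ := exists_surRound_eq_single t α j
  by_cases hik : i = k
  · have hchosen : surRound t α j i = 1 := by simp [hround, hik]
    have hN : 0 ≤ ((N : ℝ) - 1) / N := natCast_sub_one_div_self_nonneg N
    calc -(((N : ℝ) - 1) / N * Δ) ≤ -(((N : ℝ) - 1) / N * (t (j + 1) - t j)) := by gcongr
      _ ≤ surDeviation t α j (t (j + 1)) i :=
          neg_le_surDeviation_right ht0 (hu0.trans hu.2) hα hchosen (hik ▸ hmax)
      _ ≤ surDeviation t α j u i :=
          surDeviation_le_of_surRound_eq_one hchosen hα ⟨hu0, hu.2⟩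
  · have hskipped : surRound t α j i = 0 := by simp [hround, hik]
    exact (hleft i).trans <|
      surDeviation_le_of_surRound_eq_zero hskipped (hα.restrict ⟨hu0, hu.2⟩) ⟨hj, hu.1⟩

section Grid

variable {n : ℕ} {Δ : ℝ}

theorem neg_le_surDeviation [NeZero N] {j : ℕ} (ht0 : t 0 = 0) (hmono : MonotoneOn t (Set.Iic n))
    (hmesh : ∀ l < n, t (l + 1) - t l ≤ Δ) (hα : IsRelaxedControl α (t n)) (hj : j < n) {u : ℝ}
    (hu : u ∈ Set.Icc (t j) (t (j + 1))) (i : Fin N) :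
    -(((N : ℝ) - 1) / N * Δ) ≤ surDeviation t α j u i := by
  have hgrid : ∀ l ≤ n, t l ∈ Set.Icc 0 (t n) := fun l hl =>
    ⟨ht0 ▸ hmono n.zero_le hl l.zero_le, hmono hl Set.self_mem_Iic hl⟩
  induction j generalizing u i with
  | zero =>
    have hN : 0 ≤ ((N : ℝ) - 1) / N := natCast_sub_one_div_self_nonneg N
    have hΔ : 0 ≤ Δ := (sub_nonneg.2 (hu.1.trans hu.2)).trans (hmesh 0 hj)
    refine neg_le_surDeviation_of_left ht0 ht0.ge (hα.restrict (hgrid _ hj)) (hmesh 0 hj) hu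
      (fun l => ?_) i
    rw [surDeviation_zero_left ht0]
    exact neg_nonpos.2 (mul_nonneg hN hΔ)
  | succ j ih =>
    have hj' : j < n := j.lt_succ_self.trans hj
    refine neg_le_surDeviation_of_left ht0 (hgrid _ hj.le).1 (hα.restrict (hgrid _ hj))
      (hmesh _ hj) hu (fun l => ?_) i
    rw [← surDeviation_right]
    exact ih hj' ⟨hmono hj'.le hj.le j.le_succ, le_rfl⟩ l

theorem abs_surDeviation_le [NeZero N] {j : ℕ} (ht0 : t 0 = 0) (hmono : MonotoneOn t (Set.Iic n))
    (hmesh : ∀ l < n, t (l + 1) - t l ≤ Δ) (hα : IsRelaxedControl α (t n)) (hj : j < n) {u : ℝ}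
    (hu : u ∈ Set.Icc (t j) (t (j + 1))) (i : Fin N) :
    |surDeviation t α j u i| ≤ ((N : ℝ) - 1) * Δ := by
  have hN : (1 : ℝ) ≤ N := by exact_mod_cast NeZero.one_le
  have hΔ : 0 ≤ Δ := (sub_nonneg.2 (hu.1.trans hu.2)).trans (hmesh j hj)
  have hu0 : 0 ≤ u := (ht0 ▸ hmono n.zero_le hj.le j.zero_le).trans hu.1
  have hαu : IsRelaxedControl α u :=
    hα.restrict ⟨hu0, hu.2.trans (hmono (Nat.succ_le_of_lt hj) Set.self_mem_Iic hj)⟩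
  have hlower := neg_le_surDeviation ht0 hmono hmesh hα hj hu
  refine abs_le.2 ⟨(neg_le_neg ?_).trans (hlower i), ?_⟩
  · exact mul_le_mul_of_nonneg_right (div_le_self (sub_nonneg.2 hN) hN) hΔ
  · calc surDeviation t α j u i ≤ ((N : ℝ) - 1) * (((N : ℝ) - 1) / N * Δ) := by
          simpa only [Fintype.card_fin] using
            le_card_sub_one_mul_of_sum_eq_zero (sum_surDeviation ht0 hu0 hαu j) hlower i
      _ ≤ ((N : ℝ) - 1) * Δ := by
          refine mul_le_mul_of_nonneg_left (mul_le_of_le_one_left hΔ ?_) (sub_nonneg.2 hN)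
          exact div_le_one_of_le₀ (sub_le_self _ zero_le_one) N.cast_nonneg

end Grid

theorem integral_sub_eq_surDeviation {β : ℝ → Fin N → ℝ} {j : ℕ} {u : ℝ} {i : Fin N}
    (ht0 : t 0 = 0) (hmono : ∀ l < j, t l ≤ t (l + 1))
    (hβ : ∀ l ≤ j, ∀ τ ∈ Set.Ico (t l) (t (l + 1)), β τ i = surRound t α l i)
    (hu : u ∈ Set.Icc (t j) (t (j + 1)))
    (hα : IntervalIntegrable (fun τ => α τ i) volume 0 u) :
    ∫ τ in (0 : ℝ)..u, (α τ i - β τ i) = surDeviation t α j u i := by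
  have hlast : ∀ τ ∈ Set.Ico (t j) u, β τ i = surRound t α j i := fun τ hτ =>
    hβ j le_rfl τ ⟨hτ.1, hτ.2.trans_le hu.2⟩
  have hint_grid : IntervalIntegrable (fun τ => β τ i) volume 0 (t j) :=
    ht0 ▸ IntervalIntegrable.trans_iterate fun l hl =>
      intervalIntegrable_of_eq_const_Ico (hmono l hl) (hβ l hl.le)
  have hint_last : IntervalIntegrable (fun τ => β τ i) volume (t j) u :=
    intervalIntegrable_of_eq_const_Ico hu.1 hlast
  have hgrid : ∫ τ in (0 : ℝ)..t j, β τ i = surSum t α j i := by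
    rw [← ht0, integral_of_eq_const_grid_Ico hmono fun l hl => hβ l hl.le]
    simp only [surSum, smul_eq_mul, mul_comm]
  rw [intervalIntegral.integral_sub hα (hint_grid.trans hint_last),
    ← intervalIntegral.integral_add_adjacent_intervals hint_grid hint_last, hgrid,
    integral_of_eq_const_Ico hu.1 hlast, smul_eq_mul, mul_comm, surDeviation]

end SumUpRounding

/-- Lemma 4 (1) of the paper (Sager–Bock–Diehl): the sum-up rounding `β` of `α` on a
grid with mesh size `Δt` satisfies
`max_i |∫_0^t (α_i - β_i)| ≤ (N-1) Δt` for every `t ∈ [0, t_f]`. -/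
theorem sum_up_rounding_integral_deviation
    (t_f : ℝ) (ht_f : 0 < t_f) (N : ℕ) (hN : 1 ≤ N)
    (n : ℕ) (hn : 0 < n) (tg : ℕ → ℝ) (hg0 : tg 0 = 0) (hgn : tg n = t_f)
    (hmono : ∀ j < n, tg j < tg (j + 1))
    (Δt : ℝ) (hmesh : ∀ j < n, tg (j + 1) - tg j ≤ Δt)
    (α : ℝ → Fin N → ℝ)
    (hαmeas : ∀ i, Measurable fun τ => α τ i)
    (hαint : ∀ i, IntervalIntegrable (fun τ => α τ i) volume 0 t_f)
    (hα01 : ∀ τ ∈ Set.Icc (0:ℝ) t_f, ∀ i, α τ i ∈ Set.Icc (0:ℝ) 1)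
    (hαsum : ∀ τ ∈ Set.Icc (0:ℝ) t_f, ∑ i, α τ i = 1)
    (β : ℝ → Fin N → ℝ)
    (hβ : ∀ j < n, ∀ τ ∈ Set.Ico (tg j) (tg (j + 1)), β τ = surRound tg α j) :
    ∀ t ∈ Set.Icc (0:ℝ) t_f, ∀ i : Fin N,
      |∫ τ in (0:ℝ)..t, (α τ i - β τ i)| ≤ ((N : ℝ) - 1) * Δt := by
  intro u hu i
  subst hgn
  have : NeZero N := ⟨Nat.one_le_iff_ne_zero.1 hN⟩
  have hα : IsRelaxedControl α (tg n) :=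
    ⟨hαint, fun τ hτ => ⟨fun l => (hα01 τ hτ l).1, hαsum τ hτ⟩⟩
  have htg : MonotoneOn tg (Set.Iic n) :=
    monotoneOn_of_le_succ Set.ordConnected_Iic fun j _ _ hj => (hmono j hj).le
  obtain ⟨j, hj, huj⟩ := exists_mem_Icc_succ hn (hg0.symm ▸ hu)
  rw [integral_sub_eq_surDeviation hg0 (fun l hl => (hmono l (hl.trans hj)).le)
    (fun l hl τ hτ => congrFun (hβ l (hl.trans_lt hj) τ hτ) i) huj
    ((hα.restrict hu).intervalIntegrable i)]
  exact abs_surDeviation_le hg0 htg hmesh hα hj huj i
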